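/- Let $p>2$ be a prime, let $k$ be an integer coprime to $2p$, let $\omega=-\tfrac12+\tfrac{\sqrt3}{2}i\in\mathbb H$ (the upper half-plane), and suppose that the vertical line $\{\operatorname{Re} z = k/(2p)\}$ contains a point of the $\mathrm{SL}(2,\mathbb Z)$-orbit of $\omega$, say $\operatorname{Re}(g\cdot\omega)=k/(2p)$ with $g\in \mathrm{SL}(2,\mathbb Z)$. The barycenter of an ideal triangle of $\mathbb H$ with vertices $a,b,c\in\mathbb R\cup\{\infty\}$ is the image of $\omega$ under an isometry of $\mathbb H$ that maps $\{\infty,0,-1\}$ onto $\{a,b,c\}$. The Ford circle at an extended rational $x\in\mathbb Q\cup\{\infty\}$ is the image of $\{\operatorname{Im} z>1\}$ under an element of $\mathrm{SL}(2,\mathbb Z)$ that maps $\infty$ to $x$. The $\lambda$-length of the geodesic joining two distinct extended rationals $x,y$ is $e^{\ell/2}$, where $\ell$ is the hyperbolic length of its part outside the Ford circles at $x$ and $y$. Then: 1. the ideal triangle with vertices $\infty,\ \frac{k-1}{2p},\ \frac{k+1}{2p}$ has a unique barycenter, namely $\frac{k+\sqrt3\,i}{2p}$; 2. this triangle is equilateral,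 with all three sides of $\lambda$-length $p$; 3. either $p\mid k^2+3$ and $g\cdot\omega=\frac{k+\sqrt3\,i}{2p}$, the barycenter of the triangle, or $p\mid 3k^2+1$ and $g\cdot\omega=\frac{3k+\sqrt3\,i}{6p}$; 4. there exist coprime positive integers $c,d$ with $c^2-cd+d^2=p$. -/

import Mathlib

open UpperHalfPlane OnePoint
open scoped MatrixGroups MeasureTheory

/-- The primitive cube root of unity `ω = -1/2 + (√3/2) i` in the upper half-plane. -/
noncomputable def omegaH : ℍ :=
  ⟨⟨-1/2, Real.sqrt 3 / 2⟩, by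
    simp only
    positivity⟩

/-- `z` is a barycenter of the ideal triangle with vertices `a, b, c ∈ ∂ℍ = ℝ ∪ {∞}`: some isometry
of `ℍ` maps the vertices `∞, 0, -1` of the basic ideal triangle onto `{a, b, c}` and `ω` to `z`.
(`GL(2, ℝ)` acts on `ℍ` through the full isometry group, a matrix of negative determinant acting
as an orientation-reversing isometry, and on `∂ℍ` by Möbius transformations.) -/
def IsBarycenter (a b c : OnePoint ℝ) (z : ℍ) : Prop :=
  ∃ h : GL (Fin 2) ℝ,
    (fun x : OnePoint ℝ => h • x) '' {∞, ((0 : ℝ) : OnePoint ℝ), ((-1 : ℝ) : OnePoint ℝ)} = {a, b, c} ∧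
      h • omegaH = z

/-- The (open) Ford circle at an extended rational `x`: the image of the horoball `{Im z > 1}`
under any element of `SL(2, ℤ)` that maps `∞` to `x`. -/
def fordCircle (x : OnePoint ℝ) : Set ℍ :=
  {z | ∃ γ : SL(2, ℤ), Matrix.SpecialLinearGroup.mapGL ℝ γ • (∞ : OnePoint ℝ) = x ∧
    1 < (γ⁻¹ • z).im}

/-- The complete geodesic of `ℍ` with endpoints `x ≠ y` in `∂ℍ`: the image of the imaginary
axis under an isometry that maps `0` to `x` and `∞` to `y`. -/
def geodesicLine (x y : OnePoint ℝ) : Set ℍ :=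
  {z | ∃ h : GL (Fin 2) ℝ, h • ((0 : ℝ) : OnePoint ℝ) = x ∧ h • (∞ : OnePoint ℝ) = y ∧
    (h⁻¹ • z).re = 0}

/-- The hyperbolic length (one-dimensional Hausdorff measure of the Poincaré metric) of the part of
the arc joining the extended rationals `x ≠ y` that lies outside the Ford circles at `x` and `y`. -/
noncomputable def truncatedLength (x y : OnePoint ℝ) : ℝ :=
  (μH[1] (geodesicLine x y \ (fordCircle x ∪ fordCircle y))).toReal

/-- The `λ`-length of the arc joining the extended rationals `x ≠ y`: the exponential of half the
truncated length. -/
noncomputable def lambdaLength (x y : OnePoint ℝ) : ℝ :=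
  Real.exp (truncatedLength x y / 2)

/-- The ideal triangle with vertices `a, b, c` is equilateral with sides of `λ`-length `l`. -/
def IsEquilateral (a b c : OnePoint ℝ) (l : ℝ) : Prop :=
  a ≠ b ∧ b ≠ c ∧ c ≠ a ∧ lambdaLength a b = l ∧ lambdaLength b c = l ∧ lambdaLength c a = l

lemma smul_infty_eq_coe {h : GL (Fin 2) ℝ} {x : ℝ} (e : h • (∞ : OnePoint ℝ) = x) :
    h 1 0 ≠ 0 ∧ h 0 0 = x * h 1 0 := by
  rw [OnePoint.smul_infty_eq_ite] at e
  split_ifs at e with hc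
  · exact absurd e (OnePoint.infty_ne_coe x)
  · rw [OnePoint.coe_eq_coe, div_eq_iff hc] at e
    exact ⟨hc, e⟩

lemma smul_coe_eq_infty {h : GL (Fin 2) ℝ} {y : ℝ} (e : h • (y : OnePoint ℝ) = ∞) :
    h 1 0 * y + h 1 1 = 0 := by
  rw [OnePoint.smul_some_eq_ite] at e
  split_ifs at e with hc
  · exact hc
  · exact absurd e (OnePoint.coe_ne_infty _)

lemma smul_coe_eq_coe {h : GL (Fin 2) ℝ} {y x : ℝ} (e : h • (y : OnePoint ℝ) = x) :
    h 1 0 * y + h 1 1 ≠ 0 ∧ h 0 0 * y + h 0 1 = x * (h 1 0 * y + h 1 1) := by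
  rw [OnePoint.smul_some_eq_ite] at e
  split_ifs at e with hc
  · exact absurd e (OnePoint.infty_ne_coe x)
  · rw [OnePoint.coe_eq_coe, div_eq_iff hc] at e
    exact ⟨hc, e⟩

lemma normSq_denom (h : GL (Fin 2) ℝ) (z : ℍ) :
    Complex.normSq (denom h z) = (h 1 0 * z.re + h 1 1) ^ 2 + (h 1 0 * z.im) ^ 2 := by
  simp [denom, Complex.normSq_apply]
  ring

lemma smul_re_eq (h : GL (Fin 2) ℝ) (z : ℍ) :
    (h • z).re = ((h 0 0 * z.re + h 0 1) * (h 1 0 * z.re + h 1 1) + h 0 0 * h 1 0 * z.im ^ 2) /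
      ((h 1 0 * z.re + h 1 1) ^ 2 + (h 1 0 * z.im) ^ 2) := by
  rw [UpperHalfPlane.re_smul, Complex.div_re, normSq_denom, ← add_div]
  congr 1
  simp [num, denom]
  ring

lemma smul_im_eq (h : GL (Fin 2) ℝ) (z : ℍ) :
    (h • z).im = |h 0 0 * h 1 1 - h 0 1 * h 1 0| * z.im /
      ((h 1 0 * z.re + h 1 1) ^ 2 + (h 1 0 * z.im) ^ 2) := by
  rw [UpperHalfPlane.im_smul_eq_div_normSq, normSq_denom, Matrix.GeneralLinearGroup.val_det_apply,
    Matrix.det_fin_two]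

lemma omegaH_re : omegaH.re = -1 / 2 := rfl

lemma omegaH_im : omegaH.im = √3 / 2 := rfl

lemma omegaH_im_sq : omegaH.im ^ 2 = 3 / 4 := by
  rw [omegaH_im, div_pow, Real.sq_sqrt (by norm_num)]
  norm_num

lemma smul_omegaH_re (h : GL (Fin 2) ℝ) :
    (h • omegaH).re = (2 * h 0 0 * h 1 0 + 2 * h 0 1 * h 1 1 - h 0 0 * h 1 1 - h 0 1 * h 1 0) /
      (2 * (h 1 0 ^ 2 - h 1 0 * h 1 1 + h 1 1 ^ 2)) := by
  rw [smul_re_eq, mul_pow, omegaH_im_sq, omegaH_re, ← mul_div_mul_left _ _ (two_ne_zero' ℝ)]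
  congr 1 <;> ring

lemma smul_omegaH_im (h : GL (Fin 2) ℝ) :
    (h • omegaH).im = |h 0 0 * h 1 1 - h 0 1 * h 1 0| * √3 /
      (2 * (h 1 0 ^ 2 - h 1 0 * h 1 1 + h 1 1 ^ 2)) := by
  rw [smul_im_eq, mul_pow, omegaH_im_sq, omegaH_im, omegaH_re,
    ← mul_div_mul_left _ _ (two_ne_zero' ℝ)]
  congr 1 <;> ring

/-- The ideal triangle with vertices `∞, u, v` has exactly one barycenter. -/
theorem isBarycenter_infty_iff {u v : ℝ} (huv : u ≠ v) (z : ℍ) :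
    IsBarycenter ∞ (u : OnePoint ℝ) (v : OnePoint ℝ) z ↔
      z.re = (u + v) / 2 ∧ z.im = √3 / 2 * |v - u| := by
  constructor
  · rintro ⟨h, hS, rfl⟩
    have mem (x : OnePoint ℝ) (hx : x ∈ ({∞, ((0 : ℝ) : OnePoint ℝ), ((-1 : ℝ) : OnePoint ℝ)} :
        Set (OnePoint ℝ))) : h • x = ∞ ∨ h • x = u ∨ h • x = v := by
      have : h • x ∈ ({∞, (u : OnePoint ℝ), (v : OnePoint ℝ)} : Set (OnePoint ℝ)) :=
        hS ▸ Set.mem_image_of_mem _ hx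
      simpa using this
    have inj {x y w : OnePoint ℝ} (h1 : h • x = w) (h2 : h • y = w) : x = y :=
      MulAction.injective h (h1.trans h2.symm)
    have n1 : (∞ : OnePoint ℝ) ≠ ((0 : ℝ) : OnePoint ℝ) := OnePoint.infty_ne_coe _
    have n2 : (∞ : OnePoint ℝ) ≠ ((-1 : ℝ) : OnePoint ℝ) := OnePoint.infty_ne_coe _
    have n3 : ((0 : ℝ) : OnePoint ℝ) ≠ ((-1 : ℝ) : OnePoint ℝ) := by
      rw [Ne, OnePoint.coe_eq_coe]; norm_num
    rw [smul_omegaH_re, smul_omegaH_im]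
    generalize ha : h 0 0 = a at *
    generalize hb : h 0 1 = b at *
    generalize hc : h 1 0 = c at *
    generalize hd : h 1 1 = d at *
    have key (t : ℝ) (ht : t ≠ 0) (s : ℝ) (hs : s = v - u ∨ s = u - v)
        (hn : c ^ 2 - c * d + d ^ 2 = t ^ 2)
        (hdt : a * d - b * c = t ^ 2 * s)
        (hr : 2 * a * c + 2 * b * d - a * d - b * c = t ^ 2 * (u + v)) :
        (2 * a * c + 2 * b * d - a * d - b * c) / (2 * (c ^ 2 - c * d + d ^ 2)) = (u + v) / 2 ∧
        |a * d - b * c| * √3 / (2 * (c ^ 2 - c * d + d ^ 2)) = √3 / 2 * |v - u| := by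
      have hs' : |s| = |v - u| := by
        rcases hs with rfl | rfl
        · rfl
        · exact abs_sub_comm _ _
      rw [hr, hn, hdt, abs_mul, hs', abs_of_nonneg (sq_nonneg t)]
      constructor <;> field_simp
    rcases mem ∞ (by simp) with e1 | e1 | e1 <;>
    rcases mem ((0 : ℝ) : OnePoint ℝ) (by simp) with e2 | e2 | e2 <;>
    first
    | exact absurd (inj e1 e2) n1
    | skip
    all_goals
      rcases mem ((-1 : ℝ) : OnePoint ℝ) (by simp) with e3 | e3 | e3 <;>
      first
      | exact absurd (inj e1 e3) n2
      | exact absurd (inj e2 e3) n3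
      | skip
    · rw [OnePoint.smul_infty_eq_self_iff, hc] at e1
      have e2 := smul_coe_eq_coe e2
      have e3 := smul_coe_eq_coe e3
      rw [ha, hb, hc, hd] at *
      subst e1
      obtain rfl : b = u * d := by linarith [e2.2]
      obtain rfl : a = (u - v) * d := by linarith [e3.2]
      exact key d (by simpa using e2.1) (u - v) (by simp) (by ring) (by ring) (by ring)
    · rw [OnePoint.smul_infty_eq_self_iff, hc] at e1
      have e2 := smul_coe_eq_coe e2
      have e3 := smul_coe_eq_coe e3
      rw [ha, hb, hc, hd] at *
      subst e1
      obtain rfl : b = v * d := by linarith [e2.2]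
      obtain rfl : a = (v - u) * d := by linarith [e3.2]
      exact key d (by simpa using e2.1) (v - u) (by simp) (by ring) (by ring) (by ring)
    · have e1 := smul_infty_eq_coe e1
      have e2 := smul_coe_eq_infty e2
      have e3 := smul_coe_eq_coe e3
      rw [ha, hb, hc, hd] at *
      obtain rfl : d = 0 := by linarith
      obtain rfl : a = u * c := e1.2
      obtain rfl : b = (u - v) * c := by linarith [e3.2]
      exact key c e1.1 (v - u) (by simp) (by ring) (by ring) (by ring)
    · have e1 := smul_infty_eq_coe e1
      have e2 := smul_coe_eq_coe e2
      have e3 := smul_coe_eq_infty e3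
      rw [ha, hb, hc, hd] at *
      obtain rfl : d = c := by linarith
      obtain rfl : a = u * d := e1.2
      obtain rfl : b = v * d := by linarith [e2.2]
      exact key d e1.1 (u - v) (by simp) (by ring) (by ring) (by ring)
    · have e1 := smul_infty_eq_coe e1
      have e2 := smul_coe_eq_infty e2
      have e3 := smul_coe_eq_coe e3
      rw [ha, hb, hc, hd] at *
      obtain rfl : d = 0 := by linarith
      obtain rfl : a = v * c := e1.2
      obtain rfl : b = (v - u) * c := by linarith [e3.2]
      exact key c e1.1 (u - v) (by simp) (by ring) (by ring) (by ring)
    · have e1 := smul_infty_eq_coe e1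
      have e2 := smul_coe_eq_coe e2
      have e3 := smul_coe_eq_infty e3
      rw [ha, hb, hc, hd] at *
      obtain rfl : d = c := by linarith
      obtain rfl : a = v * d := e1.2
      obtain rfl : b = u * d := by linarith [e2.2]
      exact key d e1.1 (v - u) (by simp) (by ring) (by ring) (by ring)
  · rintro ⟨hr, hi⟩
    refine ⟨.mkOfDetNeZero !![v - u, v; 0, 1] (by simpa [sub_eq_zero] using huv.symm), ?_, ?_⟩
    · rw [Set.image_insert_eq, Set.image_pair, Set.pair_comm (u : OnePoint ℝ)]
      simp [OnePoint.smul_infty_eq_ite, OnePoint.smul_some_eq_ite,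
        Matrix.GeneralLinearGroup.mkOfDetNeZero]
    · refine UpperHalfPlane.ext_re_im ?_ ?_
      · rw [smul_omegaH_re, hr]
        simp [Matrix.GeneralLinearGroup.mkOfDetNeZero]
        ring
      · rw [smul_omegaH_im, hi]
        simp [Matrix.GeneralLinearGroup.mkOfDetNeZero]
        ring

/-- Arithmetic of an orbit point of `ω` on the line `Re z = k / (2p)`: the norm `c² - cd + d²` of
the bottom row is `p` or `3p`. -/
theorem bottom_row_norm_of_re_eq {p : ℕ} (hp : p.Prime) {k : ℤ} (hk : IsCoprime k (2 * (p : ℤ)))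
    (g : SL(2, ℤ)) (hre : (g • omegaH).re = (k : ℝ) / (2 * (p : ℝ))) :
    ((p : ℤ) ∣ k ^ 2 + 3 ∧ g 1 0 ^ 2 - g 1 0 * g 1 1 + g 1 1 ^ 2 = p) ∨
      ((p : ℤ) ∣ 3 * k ^ 2 + 1 ∧ g 1 0 ^ 2 - g 1 0 * g 1 1 + g 1 1 ^ 2 = 3 * p) := by
  have hdet : g 0 0 * g 1 1 - g 0 1 * g 1 0 = 1 := by rw [← Matrix.det_fin_two, g.det_coe]
  rw [ModularGroup.sl_moeb, smul_omegaH_re] at hre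
  simp only [Matrix.SpecialLinearGroup.coe_GL_coe_matrix, Matrix.SpecialLinearGroup.map_apply_coe,
    RingHom.mapMatrix_apply, Matrix.map_apply, Int.coe_castRingHom] at hre
  generalize g 0 0 = a at *
  generalize g 0 1 = b at *
  generalize g 1 0 = c at *
  generalize g 1 1 = d at *
  have hp0 : (0 : ℤ) < p := by exact_mod_cast hp.pos
  have hpos : 0 < c ^ 2 - c * d + d ^ 2 := by
    rcases eq_or_ne c 0 with rfl | hc
    · have : d ≠ 0 := by rintro rfl; simp at hdet
      have : 0 < d ^ 2 := by positivity
      linarith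
    · have : 0 < c ^ 2 := by positivity
      nlinarith [sq_nonneg (c - 2 * d)]
  have hposR : (0 : ℝ) < (c : ℝ) ^ 2 - c * d + d ^ 2 := by exact_mod_cast hpos
  have hpR : (0 : ℝ) < p := by exact_mod_cast hp.pos
  rw [div_eq_div_iff (by positivity) (by positivity)] at hre
  have hmn : (2 * a * c + 2 * b * d - a * d - b * c) * p = k * (c ^ 2 - c * d + d ^ 2) := by
    have : ((2 * a * c + 2 * b * d - a * d - b * c : ℤ) : ℝ) * p =
        k * (c ^ 2 - c * d + d ^ 2 : ℤ) := by push_cast; linarith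
    exact_mod_cast this
  have hnorm : (2 * a * c + 2 * b * d - a * d - b * c) ^ 2 + 3 =
      4 * (c ^ 2 - c * d + d ^ 2) * (a ^ 2 - a * b + b ^ 2) := by
    linear_combination -3 * (a * d - b * c + 1) * hdet
  generalize 2 * a * c + 2 * b * d - a * d - b * c = m at *
  generalize c ^ 2 - c * d + d ^ 2 = n at *
  generalize a ^ 2 - a * b + b ^ 2 = n' at *
  obtain ⟨e, rfl⟩ : (p : ℤ) ∣ n :=
    hk.of_mul_right_right.symm.dvd_of_dvd_mul_left ⟨m, by rw [← hmn]; ring⟩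
  obtain rfl : m = k * e := by
    apply mul_right_cancel₀ hp0.ne'
    rw [hmn]; ring
  have he : 0 < e := pos_of_mul_pos_right hpos hp0.le
  have he3 : e ∣ 3 := ⟨4 * p * n' - k ^ 2 * e, by linear_combination hnorm⟩
  have hle : e ≤ 3 := Int.le_of_dvd (by norm_num) he3
  interval_cases e
  · exact .inl ⟨⟨4 * n', by linear_combination hnorm⟩, by ring⟩
  · omega
  · refine .inr ⟨⟨4 * n', ?_⟩, by ring⟩
    have : 3 * (3 * k ^ 2 + 1) = 3 * (p * (4 * n')) := by linear_combination hnorm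
    linarith

/-- A prime represented by the norm form `x² - xy + y²` is represented with positive coprime
arguments. -/
theorem exists_pos_coprime_of_norm_eq_prime {p : ℕ} (hp : p.Prime) {x y : ℤ}
    (h : x ^ 2 - x * y + y ^ 2 = p) :
    ∃ c d : ℤ, 0 < c ∧ 0 < d ∧ IsCoprime c d ∧ c ^ 2 - c * d + d ^ 2 = p := by
  have cop {x y : ℤ} (h : x ^ 2 - x * y + y ^ 2 = p) : IsCoprime x y := by
    have hpz : Prime (p : ℤ) := Nat.prime_iff_prime_int.mp hp
    rw [Int.isCoprime_iff_gcd_eq_one, ← Int.natAbs_natCast (x.gcd y),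
      ← Int.isUnit_iff_natAbs_eq]
    obtain ⟨a, ha⟩ := Int.gcd_dvd_left x y
    obtain ⟨b, hb⟩ := Int.gcd_dvd_right x y
    refine hpz.irreducible.squarefree _ ⟨a ^ 2 - a * b + b ^ 2, ?_⟩
    rw [← h]
    generalize ((Int.gcd x y : ℕ) : ℤ) = t at *
    rw [ha, hb]; ring
  have hsq (t : ℤ) (ht : t ^ 2 = p) : False := by
    have hpz : Prime (p : ℤ) := Nat.prime_iff_prime_int.mp hp
    exact (hpz.irreducible.not_isSquare) ⟨t, by rw [← ht]; ring⟩
  have hx : x ≠ 0 := by rintro rfl; exact hsq y (by linarith)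
  have hy : y ≠ 0 := by rintro rfl; exact hsq x (by linarith)
  rcases hx.lt_or_gt with hx | hx <;> rcases hy.lt_or_gt with hy | hy
  · have e : (-x) ^ 2 - (-x) * (-y) + (-y) ^ 2 = p := by rw [← h]; ring
    exact ⟨-x, -y, by omega, by omega, cop e, e⟩
  · have e : (y - x) ^ 2 - (y - x) * y + y ^ 2 = p := by rw [← h]; ring
    exact ⟨y - x, y, by omega, by omega, cop e, e⟩
  · have e : (x - y) ^ 2 - (x - y) * x + x ^ 2 = p := by rw [← h]; ring
    exact ⟨x - y, x, by omega, by omega, cop e, e⟩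
  · exact ⟨x, y, hx, hy, cop h, h⟩

lemma exists_norm_eq_of_norm_eq_three_mul {c d n : ℤ} (h : c ^ 2 - c * d + d ^ 2 = 3 * n) :
    ∃ x y : ℤ, x ^ 2 - x * y + y ^ 2 = n := by
  obtain ⟨s, hs⟩ : (3 : ℤ) ∣ c + d :=
    Int.prime_three.dvd_of_dvd_pow (n := 2) ⟨n + c * d, by linear_combination h⟩
  obtain rfl : d = 3 * s - c := by linarith
  exact ⟨c - s, s, by linarith⟩

instance : IsIsometricSMul SL(2, ℤ) ℍ :=
  ⟨fun γ => isometry_smul ℍ (γ.map (Int.castRingHom ℝ) : SL(2, ℝ))⟩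

open scoped Pointwise in
lemma fordCircle_smul (γ : SL(2, ℤ)) (x : OnePoint ℝ) :
    fordCircle (Matrix.SpecialLinearGroup.mapGL ℝ γ • x) = γ • fordCircle x := by
  ext z
  rw [Set.mem_smul_set_iff_inv_smul_mem]
  constructor
  · rintro ⟨δ, h1, h2⟩
    refine ⟨γ⁻¹ * δ, by rw [map_mul, mul_smul, h1, map_inv, inv_smul_smul], ?_⟩
    rwa [mul_inv_rev, inv_inv, mul_smul, smul_inv_smul]
  · rintro ⟨δ, h1, h2⟩
    refine ⟨γ * δ, by rw [map_mul, mul_smul, h1], ?_⟩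
    rwa [mul_inv_rev, mul_smul]

open scoped Pointwise in
lemma geodesicLine_smul (γ : SL(2, ℤ)) (x y : OnePoint ℝ) :
    geodesicLine (Matrix.SpecialLinearGroup.mapGL ℝ γ • x)
      (Matrix.SpecialLinearGroup.mapGL ℝ γ • y) = γ • geodesicLine x y := by
  ext z
  rw [Set.mem_smul_set_iff_inv_smul_mem]
  have hγ : γ⁻¹ • z = (Matrix.SpecialLinearGroup.mapGL ℝ γ)⁻¹ • z := by
    rw [← map_inv]; rfl
  rw [hγ]
  generalize Matrix.SpecialLinearGroup.mapGL ℝ γ = G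
  constructor
  · rintro ⟨h, h1, h2, h3⟩
    refine ⟨G⁻¹ * h, by rw [mul_smul, h1, inv_smul_smul], by rw [mul_smul, h2, inv_smul_smul], ?_⟩
    rwa [mul_inv_rev, inv_inv, mul_smul, smul_inv_smul]
  · rintro ⟨h, h1, h2, h3⟩
    refine ⟨G * h, by rw [mul_smul, h1], by rw [mul_smul, h2], ?_⟩
    rwa [mul_inv_rev, mul_smul]

open scoped Pointwise in
/-- Truncated lengths are invariant under the modular group. -/
theorem truncatedLength_smul (γ : SL(2, ℤ)) (x y : OnePoint ℝ) :
    truncatedLength (Matrix.SpecialLinearGroup.mapGL ℝ γ • x)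
      (Matrix.SpecialLinearGroup.mapGL ℝ γ • y) = truncatedLength x y := by
  unfold truncatedLength
  rw [fordCircle_smul, fordCircle_smul, geodesicLine_smul, ← Set.smul_set_union,
    ← Set.smul_set_sdiff, MeasureTheory.hausdorffMeasure_smul γ (.inl zero_le_one)]

lemma geodesicLine_comm (x y : OnePoint ℝ) : geodesicLine x y = geodesicLine y x := by
  have key (x y : OnePoint ℝ) : geodesicLine x y ⊆ geodesicLine y x := by
    rintro z ⟨h, h1, h2, h3⟩
    let J : GL (Fin 2) ℝ := .mkOfDetNeZero !![0, 1; 1, 0] (by simp)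
    have hJJ : J⁻¹ = J := by
      rw [inv_eq_iff_mul_eq_one]
      ext i j
      fin_cases i <;> fin_cases j <;>
        simp [J, Matrix.GeneralLinearGroup.mkOfDetNeZero]
    refine ⟨h * J, ?_, ?_, ?_⟩
    · rw [mul_smul, ← h2]
      congr 1
      simp [OnePoint.smul_some_eq_ite, J, Matrix.GeneralLinearGroup.mkOfDetNeZero]
    · rw [mul_smul, ← h1]
      congr 1
      simp [OnePoint.smul_infty_eq_ite, J, Matrix.GeneralLinearGroup.mkOfDetNeZero]
    · rw [mul_inv_rev, mul_smul, hJJ, smul_re_eq, h3]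
      simp [J, Matrix.GeneralLinearGroup.mkOfDetNeZero]
  exact (key x y).antisymm (key y x)

theorem truncatedLength_comm (x y : OnePoint ℝ) : truncatedLength x y = truncatedLength y x := by
  unfold truncatedLength
  rw [geodesicLine_comm, Set.union_comm]

lemma geodesicLine_infty_coe (x : ℝ) : geodesicLine ∞ (x : OnePoint ℝ) = {z | z.re = x} := by
  ext z
  constructor
  · rintro ⟨h, h1, h2, h3⟩
    have e1 := smul_coe_eq_infty h1
    obtain ⟨hc, e2⟩ := smul_infty_eq_coe h2
    have hd : h 1 1 = 0 := by simpa using e1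
    obtain ⟨w, rfl⟩ : ∃ w, z = h • w := ⟨h⁻¹ • z, by simp⟩
    rw [inv_smul_smul] at h3
    have := w.im_pos.ne'
    rw [Set.mem_ofPred_eq, smul_re_eq, h3, hd, e2]
    field_simp
    ring
  · intro hz
    have hz : z.re = x := hz
    let h : GL (Fin 2) ℝ := .mkOfDetNeZero !![0, 1; 1, -x] (by simp)
    refine ⟨h⁻¹, ?_, ?_, ?_⟩
    · rw [inv_smul_eq_iff]
      simp [OnePoint.smul_infty_eq_ite, h, Matrix.GeneralLinearGroup.mkOfDetNeZero]
    · rw [inv_smul_eq_iff]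
      simp [OnePoint.smul_some_eq_ite, h, Matrix.GeneralLinearGroup.mkOfDetNeZero]
    · rw [inv_inv, smul_re_eq, hz]
      simp [h, Matrix.GeneralLinearGroup.mkOfDetNeZero]

lemma SL_inv_smul_im (γ : SL(2, ℤ)) (z : ℍ) :
    (γ⁻¹ • z).im = z.im / ((γ 0 0 - γ 1 0 * z.re) ^ 2 + (γ 1 0 * z.im) ^ 2) := by
  rw [ModularGroup.im_smul_eq_div_normSq, normSq_denom]
  have h0 : (γ⁻¹) 1 0 = -γ 1 0 := by rw [Matrix.SpecialLinearGroup.SL2_inv_expl]; rfl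
  have h1 : (γ⁻¹) 1 1 = γ 0 0 := by rw [Matrix.SpecialLinearGroup.SL2_inv_expl]; rfl
  change z.im / (((γ⁻¹ 1 0 : ℤ) * z.re + (γ⁻¹ 1 1 : ℤ)) ^ 2 + ((γ⁻¹ 1 0 : ℤ) * z.im) ^ 2) = _
  rw [h0, h1]
  push_cast
  congr 1
  ring

lemma fordCircle_infty : fordCircle ∞ = {z | 1 < z.im} := by
  ext z
  constructor
  · rintro ⟨γ, h1, h2⟩
    rw [OnePoint.smul_infty_eq_self_iff] at h1
    have hc : γ 1 0 = 0 := by simpa using h1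
    have hdet : γ 0 0 * γ 1 1 - γ 0 1 * γ 1 0 = 1 := by rw [← Matrix.det_fin_two, γ.det_coe]
    have ha : γ 0 0 ^ 2 = 1 := by
      rw [hc, mul_zero, sub_zero] at hdet
      rcases Int.eq_one_or_neg_one_of_mul_eq_one hdet with h | h <;> rw [h] <;> norm_num
    have ha' : (γ 0 0 : ℝ) ^ 2 = 1 := by exact_mod_cast ha
    rw [SL_inv_smul_im, hc] at h2
    simpa [ha'] using h2
  · intro hz
    exact ⟨1, by simp, by simpa using hz⟩

lemma exists_SL_smul_infty_eq {r q : ℤ} (hq : q ≠ 0) (h : IsCoprime r q) :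
    ∃ γ : SL(2, ℤ), γ 0 0 = r ∧ γ 1 0 = q ∧
      Matrix.SpecialLinearGroup.mapGL ℝ γ • (∞ : OnePoint ℝ) = ((r / q : ℝ) : OnePoint ℝ) := by
  obtain ⟨a, b, hab⟩ := h
  refine ⟨⟨!![r, -b; q, a], by rw [Matrix.det_fin_two_of]; linarith⟩, rfl, rfl, ?_⟩
  rw [OnePoint.smul_infty_eq_ite]
  exact if_neg (Int.cast_ne_zero.mpr hq)

lemma fordCircle_coe {r q : ℤ} (hq : 0 < q) (h : IsCoprime r q) :
    fordCircle ((r / q : ℝ) : OnePoint ℝ) =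
      {z | ((r : ℝ) - q * z.re) ^ 2 + (q * z.im) ^ 2 < z.im} := by
  have pos (z : ℍ) {c : ℤ} (hc : c ≠ 0) (a : ℝ) : 0 < (a - c * z.re) ^ 2 + (c * z.im) ^ 2 := by
    have := z.im_pos
    positivity
  ext z
  constructor
  · rintro ⟨γ, h1, h2⟩
    obtain ⟨hc, h1⟩ := smul_infty_eq_coe h1
    simp only [Matrix.SpecialLinearGroup.mapGL_coe_matrix, Matrix.SpecialLinearGroup.map_apply_coe,
      RingHom.mapMatrix_apply, Matrix.map_apply, algebraMap_int_eq, Int.coe_castRingHom,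
      ne_eq, Int.cast_eq_zero] at h1 hc
    have hqR : (q : ℝ) ≠ 0 := by exact_mod_cast hq.ne'
    have hcross : γ 0 0 * q = r * γ 1 0 := by
      rw [div_mul_eq_mul_div, eq_div_iff hqR] at h1
      exact_mod_cast h1
    have hcop : IsCoprime (γ 0 0) (γ 1 0) := by
      have hdet : γ 0 0 * γ 1 1 - γ 0 1 * γ 1 0 = 1 := by rw [← Matrix.det_fin_two, γ.det_coe]
      exact ⟨γ 1 1, -γ 0 1, by linarith⟩
    rw [SL_inv_smul_im, one_lt_div (pos z hc _)] at h2
    have d1 : γ 1 0 ∣ q := hcop.symm.dvd_of_dvd_mul_left ⟨r, by rw [hcross]; ring⟩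
    have d2 : q ∣ γ 1 0 := h.symm.dvd_of_dvd_mul_left ⟨γ 0 0, by rw [← hcross]; ring⟩
    rw [Set.mem_ofPred_eq]
    rcases Int.associated_iff.mp (associated_of_dvd_dvd d1 d2) with e | e
    · have e' : γ 0 0 = r := by
        rw [e] at hcross; exact mul_right_cancel₀ hq.ne' hcross
      rwa [e, e'] at h2
    · have e' : γ 0 0 = -r := by
        apply mul_right_cancel₀ hq.ne'
        rw [hcross, e]; ring
      rw [e, e'] at h2
      push_cast at h2
      linarith
  · intro hz
    obtain ⟨γ, e1, e2, e3⟩ := exists_SL_smul_infty_eq hq.ne' h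
    refine ⟨γ, e3, ?_⟩
    rw [SL_inv_smul_im, e1, e2, one_lt_div (pos z hq.ne' _)]
    exact hz

/-- The truncated length of the vertical geodesic from `∞` to a reduced fraction `r / q`. -/
theorem truncatedLength_infty_coe {r q : ℤ} (hq : 0 < q) (h : IsCoprime r q) :
    truncatedLength ∞ ((r / q : ℝ) : OnePoint ℝ) = 2 * Real.log q := by
  have hqR : (0 : ℝ) < q := by exact_mod_cast hq
  have hq1 : (1 : ℝ) ≤ q := by exact_mod_cast hq
  have hset : geodesicLine ∞ ((r / q : ℝ) : OnePoint ℝ) \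
      (fordCircle ∞ ∪ fordCircle ((r / q : ℝ) : OnePoint ℝ)) =
      (fun y => UpperHalfPlane.mk ⟨(r / q : ℝ), Real.exp y⟩ (Real.exp_pos y)) ''
        Set.Icc (-(2 * Real.log q)) 0 := by
    have key (t : ℝ) (ht : 0 < t) :
        (¬ (1 < t ∨ ((r : ℝ) - q * (r / q)) ^ 2 + (q * t) ^ 2 < t)) ↔
          -(2 * Real.log q) ≤ Real.log t ∧ Real.log t ≤ 0 := by
      rw [not_or, not_lt, not_lt, Real.log_nonpos_iff ht.le, and_comm]
      refine and_congr_left fun _ => ?_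
      have e1 : -(2 * Real.log q) = Real.log ((q ^ 2)⁻¹) := by
        rw [Real.log_inv, Real.log_pow]; norm_num
      rw [e1, Real.log_le_log_iff (by positivity) ht, inv_le_iff_one_le_mul₀ (by positivity),
        mul_div_cancel₀ _ hqR.ne']
      have e2 : ((r : ℝ) - r) ^ 2 + (q * t) ^ 2 = t * (t * q ^ 2) := by ring
      rw [e2]
      exact ⟨fun h' => by nlinarith, fun h' => by nlinarith⟩
    rw [geodesicLine_infty_coe, fordCircle_infty, fordCircle_coe hq h]
    ext z
    simp only [Set.mem_sdiff, Set.mem_ofPred_eq, Set.mem_union, Set.mem_image, Set.mem_Icc]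
    constructor
    · rintro ⟨h1, h2⟩
      rw [h1, key _ z.im_pos] at h2
      refine ⟨Real.log z.im, h2, ?_⟩
      refine UpperHalfPlane.ext_re_im ?_ ?_
      · exact h1.symm
      · exact Real.exp_log z.im_pos
    · rintro ⟨y, hy, rfl⟩
      refine ⟨rfl, ?_⟩
      have := (key (Real.exp y) (Real.exp_pos y)).mpr (by rwa [Real.log_exp])
      exact this
  unfold truncatedLength
  rw [hset, (isometry_vertical_line _).hausdorffMeasure_image (.inl zero_le_one),
    MeasureTheory.hausdorffMeasure_real, Real.volume_Icc, ENNReal.toReal_ofReal]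
  · ring
  · linarith [Real.log_nonneg hq1]

theorem lambdaLength_infty_coe {r q : ℤ} (hq : 0 < q) (h : IsCoprime r q) :
    lambdaLength ∞ ((r / q : ℝ) : OnePoint ℝ) = q := by
  rw [lambdaLength, truncatedLength_infty_coe hq h, mul_div_cancel_left₀ _ two_ne_zero,
    Real.exp_log (by exact_mod_cast hq)]

theorem lambdaLength_comm (x y : OnePoint ℝ) : lambdaLength x y = lambdaLength y x := by
  rw [lambdaLength, truncatedLength_comm, lambdaLength]

/-- Consecutive reduced fractions with the common denominator `q` are at `λ`-length `q`. -/
theorem lambdaLength_coe_coe {r q : ℤ} (hq : 0 < q) (h : IsCoprime r q) (h' : IsCoprime (r + 1) q) :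
    lambdaLength ((r / q : ℝ) : OnePoint ℝ) (((r + 1 : ℤ) / q : ℝ) : OnePoint ℝ) = q := by
  obtain ⟨γ, e1, e2, e3⟩ := exists_SL_smul_infty_eq hq.ne' h
  have hdet : γ 0 0 * γ 1 1 - γ 0 1 * γ 1 0 = 1 := by rw [← Matrix.det_fin_two, γ.det_coe]
  have hqR : (q : ℝ) ≠ 0 := by exact_mod_cast hq.ne'
  rw [e1, e2] at hdet
  have hcop : IsCoprime (-(γ 1 1 + 1)) q := by
    have h1 : IsCoprime (γ 1 1) q := ⟨r, -γ 0 1, by linarith⟩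
    have h2 : IsCoprime ((r + 1) * γ 1 1 + q * -γ 0 1) q := (h'.mul_left h1).add_mul_left_left _
    have : (r + 1) * γ 1 1 + q * -γ 0 1 = γ 1 1 + 1 := by linarith
    rw [this] at h2
    exact h2.neg_left
  have e4 : Matrix.SpecialLinearGroup.mapGL ℝ γ • (((-(γ 1 1 + 1) : ℤ) / q : ℝ) : OnePoint ℝ) =
      (((r + 1 : ℤ) / q : ℝ) : OnePoint ℝ) := by
    have hden : (q : ℝ) * (((-(γ 1 1 + 1) : ℤ) : ℝ) / q) + γ 1 1 = -1 := by
      rw [mul_div_cancel₀ _ hqR]; push_cast; ring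
    have hdetR : (r : ℝ) * γ 1 1 - γ 0 1 * q = 1 := by exact_mod_cast hdet
    rw [OnePoint.smul_some_eq_ite]
    simp only [Matrix.SpecialLinearGroup.mapGL_coe_matrix, Matrix.SpecialLinearGroup.map_apply_coe,
      RingHom.mapMatrix_apply, Matrix.map_apply, algebraMap_int_eq, Int.coe_castRingHom, e1, e2]
    rw [hden, if_neg (by norm_num), OnePoint.coe_eq_coe]
    push_cast
    field_simp
    linarith
  rw [lambdaLength, ← e3, ← e4, truncatedLength_smul]
  exact lambdaLength_infty_coe hq hcop

theorem isEquilateral_infty_coe_coe {r q : ℤ} (hq : 0 < q) (h : IsCoprime r q)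
    (h' : IsCoprime (r + 1) q) :
    IsEquilateral ∞ ((r / q : ℝ) : OnePoint ℝ) (((r + 1 : ℤ) / q : ℝ) : OnePoint ℝ) q := by
  refine ⟨OnePoint.infty_ne_coe _, ?_, OnePoint.coe_ne_infty _, lambdaLength_infty_coe hq h,
    lambdaLength_coe_coe hq h h', ?_⟩
  · have hqR : (q : ℝ) ≠ 0 := by exact_mod_cast hq.ne'
    rw [Ne, OnePoint.coe_eq_coe, div_left_inj' hqR]
    exact_mod_cast (lt_add_one r).ne
  · rw [lambdaLength_comm, lambdaLength_infty_coe hq h']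

theorem barycenter_on_line (p : ℕ) (hp : p.Prime) (hp2 : 2 < p) (k : ℤ)
    (hk : IsCoprime k (2 * (p : ℤ))) (g : SL(2, ℤ))
    (hre : (g • omegaH).re = (k : ℝ) / (2 * (p : ℝ))) :
    -- the ideal triangle has exactly one barycenter, `(k + √3 i) / (2p)`
    (∀ z : ℍ, IsBarycenter ∞ ((((k : ℝ) - 1) / (2 * (p : ℝ)) : ℝ) : OnePoint ℝ)
        ((((k : ℝ) + 1) / (2 * (p : ℝ)) : ℝ) : OnePoint ℝ) z ↔
          (z : ℂ) = ((k : ℂ) + Real.sqrt 3 * Complex.I) / (2 * (p : ℂ))) ∧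
    -- it is equilateral with sides of `λ`-length `p`
    IsEquilateral ∞ ((((k : ℝ) - 1) / (2 * (p : ℝ)) : ℝ) : OnePoint ℝ)
        ((((k : ℝ) + 1) / (2 * (p : ℝ)) : ℝ) : OnePoint ℝ) (p : ℝ) ∧
    -- the position of the orbit point on the line
    (((p : ℤ) ∣ k ^ 2 + 3 ∧
        ((g • omegaH : ℍ) : ℂ) = ((k : ℂ) + Real.sqrt 3 * Complex.I) / (2 * (p : ℂ))) ∨
      ((p : ℤ) ∣ 3 * k ^ 2 + 1 ∧
        ((g • omegaH : ℍ) : ℂ) = (3 * (k : ℂ) + Real.sqrt 3 * Complex.I) / (6 * (p : ℂ)))) ∧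
    -- `p` is the norm of a primitive Eisenstein integer
    ∃ c d : ℤ, 0 < c ∧ 0 < d ∧ IsCoprime c d ∧ c ^ 2 - c * d + d ^ 2 = (p : ℤ) := by

  have hpR : (0 : ℝ) < p := by exact_mod_cast hp.pos
  have hpz : Prime (p : ℤ) := Nat.prime_iff_prime_int.mp hp
  have hrow := bottom_row_norm_of_re_eq hp hk g hre
  have hdet : g 0 0 * g 1 1 - g 0 1 * g 1 0 = 1 := by rw [← Matrix.det_fin_two, g.det_coe]
  have him : (g • omegaH).im =
      √3 / (2 * ((g 1 0 ^ 2 - g 1 0 * g 1 1 + g 1 1 ^ 2 : ℤ) : ℝ)) := by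
    have hdetR : (g 0 0 : ℝ) * g 1 1 - g 0 1 * g 1 0 = 1 := by exact_mod_cast hdet
    rw [ModularGroup.sl_moeb, smul_omegaH_im]
    simp [hdetR]
  refine ⟨fun z => ?_, ?_, ?_, ?_⟩
  · have hlt : ((k : ℝ) + 1) / (2 * p) - ((k : ℝ) - 1) / (2 * p) = 1 / p := by
      field_simp; ring
    rw [isBarycenter_infty_iff (sub_ne_zero.mp (by rw [← neg_sub, hlt]; simpa using hp.ne_zero)),
      hlt, abs_of_pos (by positivity), Complex.ext_iff, coe_re, coe_im]
    have e : ((k : ℂ) + √3 * Complex.I) / (2 * (p : ℂ)) =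
        ((k / (2 * p) : ℝ) : ℂ) + ((√3 / (2 * p) : ℝ) : ℂ) * Complex.I := by
      push_cast; field_simp
    rw [e]
    simp only [Complex.add_re, Complex.add_im, Complex.re_ofReal_mul, Complex.im_ofReal_mul,
      Complex.ofReal_re, Complex.ofReal_im, Complex.I_re, Complex.I_im]
    refine and_congr (Eq.congr_right ?_) (Eq.congr_right ?_) <;> field_simp <;> ring
  · have hodd : Odd k := by
      rw [← Int.not_even_iff_odd, even_iff_two_dvd]
      intro h2
      have := (hk.of_mul_right_left).isUnit_of_dvd' h2 dvd_rfl
      norm_num [Int.isUnit_iff] at this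
    obtain ⟨r, rfl⟩ := hodd
    have h4 : ¬ (p : ℤ) ∣ 4 := by
      intro h
      have h := hpz.dvd_of_dvd_pow (show (p : ℤ) ∣ 2 ^ 2 from h)
      have := Int.le_of_dvd (by norm_num) h
      omega
    have cop (s : ℤ) (hs : (p : ℤ) ∣ s → (p : ℤ) ∣ 4) : IsCoprime s p :=
      ((hpz.irreducible.coprime_iff_not_dvd).mpr fun h => h4 (hs h)).symm
    have hr : IsCoprime r p := by
      refine cop r ?_
      rintro ⟨t, ht⟩
      rcases hrow with ⟨⟨w, hw⟩, -⟩ | ⟨⟨w, hw⟩, -⟩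
      · exact ⟨w - 4 * t * (r + 1), by linear_combination hw - 4 * (r + 1) * ht⟩
      · exact ⟨w - 12 * t * (r + 1), by linear_combination hw - 12 * (r + 1) * ht⟩
    have hr' : IsCoprime (r + 1) p := by
      refine cop (r + 1) ?_
      rintro ⟨t, ht⟩
      rcases hrow with ⟨⟨w, hw⟩, -⟩ | ⟨⟨w, hw⟩, -⟩
      · exact ⟨w - 4 * t * r, by linear_combination hw - 4 * r * ht⟩
      · exact ⟨w - 12 * t * r, by linear_combination hw - 12 * r * ht⟩
    have := isEquilateral_infty_coe_coe (Int.natCast_pos.mpr hp.pos) hr hr'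
    have e1 : (((2 * r + 1 : ℤ) : ℝ) - 1) / (2 * p) = (r : ℝ) / (p : ℤ) := by
      push_cast; field_simp; ring
    have e2 : (((2 * r + 1 : ℤ) : ℝ) + 1) / (2 * p) = ((r + 1 : ℤ) : ℝ) / (p : ℤ) := by
      push_cast; field_simp; ring
    rwa [e1, e2, ← Int.cast_natCast (R := ℝ) p]
  · rcases hrow with ⟨h1, h2⟩ | ⟨h1, h2⟩
    · refine .inl ⟨h1, ?_⟩
      rw [← re_add_im (g • omegaH), hre, him, h2]
      push_cast
      field_simp
    · refine .inr ⟨h1, ?_⟩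
      rw [← re_add_im (g • omegaH), hre, him, h2]
      push_cast
      field_simp
      ring
  · rcases hrow with ⟨-, h2⟩ | ⟨-, h2⟩
    · exact exists_pos_coprime_of_norm_eq_prime hp h2
    · obtain ⟨x, y, h⟩ := exists_norm_eq_of_norm_eq_three_mul h2
      exact exists_pos_coprime_of_norm_eq_prime hp h
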